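/- Assume p₁ > 0, p₁p₂ < 1, λ₂ < μ₂c₂, and λ₁p₁ + λ₂ > μ₁c₁p₁ + μ₂c₂. Let x₁, x₂ be real numbers with 0 < x₁ < x₂ < 1, Δ₂(x₁) = Δ₂(x₂) = 0, and Δ₂(x) < 0 for all x ∈ (x₁,x₂). Let π be an invariant distribution of the random walk (m̄_c(t)). Then π(0,0) = (λ₂ + λ₁p₁ − μ₁c₁p₁ − μ₂c₂) / (p₁·(λ₁ + λ₂p₂)·φ_Y(1)), where φ_Y(1) = exp((1/π)·∫_{x₁}^{x₂} (μ₁c₁x² − λ₁)·Θ_Y(x)/(x·h₁(x,1)) dx) and Θ_Y(x) = arctan((1−p₁p₂)·√(−Δ₂(x)) / ((1−p₁p₂)·(μ₁c₁x² − (λ₁+λ₂+μ₁c₁+μ₂c₂)x + λ₁) − 2R_Y(x))). -/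

import Mathlib

/-- Δ₂(x) = (μ₁c₁x² − (λ₁+λ₂+μ₁c₁+μ₂c₂)x + λ₁)² − 4μ₂c₂λ₂x² -/
noncomputable def Delta2 (la1 la2 mu1 mu2 c1 c2 : ℝ) (x : ℝ) : ℝ :=
  (mu1 * c1 * x ^ 2 - (la1 + la2 + mu1 * c1 + mu2 * c2) * x + la1) ^ 2
    - 4 * mu2 * c2 * la2 * x ^ 2

/-- R_Y(x) = p₁μ₁c₁(1−p₂)x² + (p₁p₂(μ₁c₁+μ₂c₂) − (1−p₂)(λ₂+λ₁p₁))x − p₂(λ₂+λ₁p₁) -/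
noncomputable def RY (la1 la2 mu1 mu2 c1 c2 p1 p2 : ℝ) (x : ℝ) : ℝ :=
  p1 * mu1 * c1 * (1 - p2) * x ^ 2
    + (p1 * p2 * (mu1 * c1 + mu2 * c2) - (1 - p2) * (la2 + la1 * p1)) * x
    - p2 * (la2 + la1 * p1)

/-- The kernel h₁(x,y) restricted to real arguments. -/
noncomputable def h1r (la1 la2 mu1 mu2 c1 c2 : ℝ) (x y : ℝ) : ℝ :=
  -(mu1 * c1) * x ^ 2 * y - mu2 * c2 * x * y ^ 2
    + (la1 + la2 + mu1 * c1 + mu2 * c2) * x * y - la1 * y - la2 * x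

/-- Θ_Y(x), the argument function appearing in the solution of the
Riemann–Hilbert problem. -/
noncomputable def ThetaY (la1 la2 mu1 mu2 c1 c2 p1 p2 : ℝ) (x : ℝ) : ℝ :=
  Real.arctan ((1 - p1 * p2) * Real.sqrt (-(Delta2 la1 la2 mu1 mu2 c1 c2 x))
    / ((1 - p1 * p2) * (mu1 * c1 * x ^ 2 - (la1 + la2 + mu1 * c1 + mu2 * c2) * x + la1)
        - 2 * RY la1 la2 mu1 mu2 c1 c2 p1 p2 x))

/-- φ_Y(1) = exp((1/π)·∫_{x₁}^{x₂} (μ₁c₁x² − λ₁)Θ_Y(x)/(x·h₁(x,1)) dx). -/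
noncomputable def phiY1 (la1 la2 mu1 mu2 c1 c2 p1 p2 x1 x2 : ℝ) : ℝ :=
  Real.exp ((1 / Real.pi) * ∫ x in x1..x2,
    (mu1 * c1 * x ^ 2 - la1) * ThetaY la1 la2 mu1 mu2 c1 c2 p1 p2 x
      / (x * h1r la1 la2 mu1 mu2 c1 c2 x 1))

/-- π is an invariant (stationary) probability distribution of the random walk (m̄_c(t)):
nonnegative, sums to 1, and satisfies the balance equations. -/
def IsInvariantDist (la1 la2 mu1 mu2 l1 l2 p1 p2 : ℝ) (π : ℕ × ℕ → ℝ) : Prop :=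
  (∀ m, 0 ≤ π m) ∧ (∑' m : ℕ × ℕ, π m = 1) ∧
  ∀ m1 m2 : ℕ,
    π (m1, m2) * (mu1 * l1 + mu2 * l2
        + (la1 + p2 * la2 * (if m2 = 0 then 1 else 0)) * (if 0 < m1 then 1 else 0)
        + (la2 + p1 * la1 * (if m1 = 0 then 1 else 0)) * (if 0 < m2 then 1 else 0))
    = mu1 * l1 * π (m1 - 1, m2) * (if 0 < m1 then 1 else 0)
      + mu2 * l2 * π (m1, m2 - 1) * (if 0 < m2 then 1 else 0)
      + (la1 + p2 * la2 * (if m2 = 0 then 1 else 0)) * π (m1 + 1, m2)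
      + (la2 + p1 * la1 * (if m1 = 0 then 1 else 0)) * π (m1, m2 + 1)

/-- A function holomorphic on a disc with positive real part on the boundary circle has positive
real part on the whole closed disc. -/
theorem re_pos_on_closedBall_of_re_pos_on_sphere {F : ℂ → ℂ} {c : ℂ} {R : ℝ} (hR : 0 < R)
    (hF : DiffContOnCl ℂ F (Metric.ball c R)) (hpos : ∀ z ∈ Metric.sphere c R, 0 < (F z).re) :
    ∀ z ∈ Metric.closedBall c R, 0 < (F z).re := by
  have hcont : ContinuousOn (fun z => (F z).re) (Metric.sphere c R) :=
    Complex.continuous_re.comp_continuousOn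
      (hF.continuousOn_ball.mono Metric.sphere_subset_closedBall)
  obtain ⟨z₀, hz₀, hmin⟩ := (isCompact_sphere c R).exists_isMinOn
    (NormedSpace.sphere_nonempty.2 hR.le) hcont
  intro z hz
  have hexp : DiffContOnCl ℂ (fun w => Complex.exp (-F w)) (Metric.ball c R) :=
    Complex.differentiable_exp.comp_diffContOnCl hF.neg
  have hle : ‖Complex.exp (-F z)‖ ≤ Real.exp (-(F z₀).re) := by
    refine Complex.norm_le_of_forall_mem_frontier_norm_le Metric.isBounded_ball hexp
      (fun w hw => ?_) (by rwa [closure_ball c hR.ne'])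
    rw [frontier_ball c hR.ne'] at hw
    rw [Complex.norm_exp]
    exact Real.exp_le_exp.2 (by simpa using hmin hw)
  rw [Complex.norm_exp, Real.exp_le_exp, Complex.neg_re, neg_le_neg_iff] at hle
  exact (hpos z₀ hz₀).trans_le hle

theorem one_sub_two_mul_cos_add_sq_pos {r : ℝ} (hr : 0 ≤ r) (hr1 : r < 1) (θ : ℝ) :
    0 < 1 - 2 * r * Real.cos θ + r ^ 2 := by
  nlinarith [mul_nonneg hr (sub_nonneg.2 (Real.cos_le_one θ)), mul_pos (sub_pos.2 hr1) (sub_pos.2 hr1)]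

/-- The kernel obtained by reflecting the Cauchy kernel at `r ^ 2` in the circle of radius `r`. -/
theorem reflected_cauchy_kernel {r : ℝ} (hr : 0 < r) (hr1 : r < 1) (θ : ℝ) :
    circleMap 0 r θ * Complex.I * ((circleMap 0 r θ - (r : ℂ) ^ 2)⁻¹ - (circleMap 0 r θ - 0)⁻¹
      - (1 - circleMap 0 r θ)⁻¹)
      = ((2 * (r * Real.sin θ / (1 - 2 * r * Real.cos θ + r ^ 2)) : ℝ) : ℂ) := by
  have hden := one_sub_two_mul_cos_add_sq_pos hr.le hr1 θ
  set ζ := circleMap 0 r θ with hζ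
  have hnorm : ‖ζ‖ = r := by simp [hζ, abs_of_pos hr]
  have hζ0 : ζ ≠ 0 := norm_pos_iff.1 (hnorm ▸ hr)
  have hζ1 : 1 - ζ ≠ 0 := by
    intro h
    rw [← sub_eq_zero.1 h] at hnorm
    simp at hnorm; linarith
  have hζr : ζ - (r : ℂ) ^ 2 ≠ 0 := by
    intro h
    rw [sub_eq_zero.1 h] at hnorm
    simp at hnorm
    nlinarith
  have hζe : ζ = r * (Real.cos θ : ℂ) + r * (Real.sin θ : ℂ) * Complex.I := by
    rw [hζ, circleMap, Complex.exp_mul_I]; push_cast; ring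
  have hcs : (Real.sin θ : ℂ) ^ 2 + (Real.cos θ : ℂ) ^ 2 = 1 := by
    exact_mod_cast Real.sin_sq_add_cos_sq θ
  have hden' : ((1 - 2 * r * Real.cos θ + r ^ 2 : ℝ) : ℂ) ≠ 0 := by exact_mod_cast hden.ne'
  have key1 : (1 - 2 * (r : ℂ) * (Real.cos θ : ℂ) + (r : ℂ) ^ 2) * ζ
      = (1 - ζ) * (ζ - (r : ℂ) ^ 2) := by
    rw [hζe]
    linear_combination ((r : ℂ) ^ 2 * (Real.sin θ : ℂ) ^ 2) * Complex.I_sq - (r : ℂ) ^ 2 * hcs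
  have key2 : 2 * (r : ℂ) * (Real.sin θ : ℂ) * Complex.I * ζ = ζ ^ 2 - (r : ℂ) ^ 2 := by
    rw [hζe]
    linear_combination ((r : ℂ) ^ 2 * (Real.sin θ : ℂ) ^ 2) * Complex.I_sq - (r : ℂ) ^ 2 * hcs
  push_cast at hden' ⊢
  rw [sub_zero, mul_div_assoc', eq_div_iff hden']
  have : ζ * Complex.I * ((ζ - (r : ℂ) ^ 2)⁻¹ - ζ⁻¹ - (1 - ζ)⁻¹)
      = -Complex.I * (ζ ^ 2 - (r : ℂ) ^ 2) / ((1 - ζ) * (ζ - (r : ℂ) ^ 2)) := by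
    field_simp
    ring
  rw [this, ← key1, ← key2]
  push_cast at hden' ⊢
  field_simp
  linear_combination (-(r : ℂ) * Complex.sin θ) * Complex.I_sq

/-- Schwarz-type formula: the logarithm of the modulus at `r ^ 2` relative to the centre, in terms
of the argument on the circle of radius `r`. -/
theorem log_norm_sub_log_norm_eq_integral_arg {F : ℂ → ℂ} {r : ℝ} (hr : 0 < r) (hr1 : r < 1)
    (hF : DiffContOnCl ℂ F (Metric.ball 0 r))
    (hpos : ∀ z ∈ Metric.sphere (0 : ℂ) r, 0 < (F z).re) :
    ∫ θ in 0..2 * Real.pi, r * Real.sin θ / (1 - 2 * r * Real.cos θ + r ^ 2)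
        * (F (circleMap 0 r θ)).arg
      = Real.pi * (Real.log ‖F ((r : ℂ) ^ 2)‖ - Real.log ‖F 0‖) := by
  have hball := re_pos_on_closedBall_of_re_pos_on_sphere hr hF hpos
  set g : ℂ → ℂ := fun z => Complex.log (F z) with hgdef
  have hg : DiffContOnCl ℂ g (Metric.ball 0 r) := by
    refine ⟨hF.differentiableOn.clog fun z hz => Or.inl (hball z (Metric.ball_subset_closedBall hz)),
      hF.continuousOn.clog fun z hz => Or.inl (hball z ?_)⟩
    rwa [closure_ball _ hr.ne'] at hz
  have hr2 : (r : ℂ) ^ 2 ∈ Metric.ball (0 : ℂ) r := by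
    simp [abs_of_pos hr]; nlinarith
  have hne1 : ∀ z ∈ Metric.closedBall (0 : ℂ) r, 1 - z ≠ 0 := by
    intro z hz h
    rw [← sub_eq_zero.1 h] at hz
    simp at hz; linarith
  have hinv : DiffContOnCl ℂ (fun z : ℂ => (1 - z)⁻¹) (Metric.ball 0 r) := by
    refine DifferentiableOn.diffContOnCl ?_
    rw [closure_ball _ hr.ne']
    exact (differentiableOn_const _).sub differentiableOn_id |>.inv hne1
  have e1 := hg.circleIntegral_sub_inv_smul hr2
  have e2 := hg.circleIntegral_sub_inv_smul (Metric.mem_ball_self hr)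
  have e3 := (hinv.smul hg).circleIntegral_eq_zero hr.le
  have hgs : ContinuousOn g (Metric.sphere 0 r) :=
    hg.continuousOn_ball.mono Metric.sphere_subset_closedBall
  have i1 : CircleIntegrable (fun z => (z - (r : ℂ) ^ 2)⁻¹ • g z) 0 r := by
    refine ContinuousOn.circleIntegrable hr.le (ContinuousOn.smul
      (ContinuousOn.inv₀ (continuousOn_id.sub continuousOn_const) fun z hz h => ?_) hgs)
    rw [show z = (r : ℂ) ^ 2 from sub_eq_zero.1 h] at hz
    simp [abs_of_pos hr] at hz; nlinarith
  have i2 : CircleIntegrable (fun z => (z - 0)⁻¹ • g z) 0 r := by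
    refine ContinuousOn.circleIntegrable hr.le (ContinuousOn.smul
      (ContinuousOn.inv₀ (continuousOn_id.sub continuousOn_const) fun z hz h => ?_) hgs)
    rw [show z = 0 from sub_eq_zero.1 h] at hz
    simp at hz; linarith
  have i3 : CircleIntegrable (fun z : ℂ => (1 - z)⁻¹ • g z) 0 r := by
    refine ContinuousOn.circleIntegrable hr.le (ContinuousOn.smul
      (ContinuousOn.inv₀ (continuousOn_const.sub continuousOn_id) fun z hz => ?_) hgs)
    exact hne1 z (Metric.sphere_subset_closedBall hz)
  have hsum : (∮ z in C(0, r), ((z - (r : ℂ) ^ 2)⁻¹ • g z - (z - 0)⁻¹ • g z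
      - (1 - z)⁻¹ • g z)) = 2 * Real.pi * Complex.I * (g ((r : ℂ) ^ 2) - g 0) := by
    have i12 : CircleIntegrable (fun z => (z - (r : ℂ) ^ 2)⁻¹ • g z - (z - 0)⁻¹ • g z) 0 r :=
      i1.sub i2
    rw [circleIntegral.integral_sub i12 i3, circleIntegral.integral_sub i1 i2, e1, e2, e3]
    simp only [smul_eq_mul]; ring
  have hpt : (∮ z in C(0, r), ((z - (r : ℂ) ^ 2)⁻¹ • g z - (z - 0)⁻¹ • g z
      - (1 - z)⁻¹ • g z)) = ∫ θ in 0..2 * Real.pi,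
        ((2 * (r * Real.sin θ / (1 - 2 * r * Real.cos θ + r ^ 2)) : ℝ) : ℂ)
          * g (circleMap 0 r θ) := by
    rw [circleIntegral]
    congr 1; ext θ
    rw [← reflected_cauchy_kernel hr hr1 θ, deriv_circleMap]
    simp only [smul_eq_mul]
    ring
  rw [hpt] at hsum
  have hint : IntervalIntegrable (fun θ : ℝ =>
      ((2 * (r * Real.sin θ / (1 - 2 * r * Real.cos θ + r ^ 2)) : ℝ) : ℂ)
          * g (circleMap 0 r θ)) MeasureTheory.volume 0 (2 * Real.pi) := by
    refine Continuous.intervalIntegrable (Continuous.mul (Complex.continuous_ofReal.comp ?_) ?_) _ _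
    · refine continuous_const.mul (Continuous.div (by fun_prop) (by fun_prop) fun θ => ?_)
      exact (one_sub_two_mul_cos_add_sq_pos hr.le hr1 θ).ne'
    · exact hgs.comp_continuous (continuous_circleMap 0 r) fun θ => circleMap_mem_sphere 0 hr.le θ
  have him := congrArg Complex.im hsum
  have hcomm := Complex.imCLM.intervalIntegral_comp_comm hint
  simp only [Complex.imCLM_apply, Complex.im_ofReal_mul] at hcomm
  rw [← hcomm] at him
  have hR : (2 * (Real.pi : ℂ) * Complex.I * (g ((r : ℂ) ^ 2) - g 0)).im
      = 2 * (Real.pi * (Real.log ‖F ((r : ℂ) ^ 2)‖ - Real.log ‖F 0‖)) := by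
    have : 2 * (Real.pi : ℂ) * Complex.I * (g ((r : ℂ) ^ 2) - g 0)
      = ((2 * Real.pi : ℝ) : ℂ) * ((g ((r : ℂ) ^ 2) - g 0) * Complex.I) := by push_cast; ring
    rw [this, Complex.im_ofReal_mul, Complex.mul_I_im, Complex.sub_re]
    simp only [hgdef, Complex.log_re]; ring
  rw [hR] at him
  simp only [hgdef, Complex.log_im, mul_assoc, intervalIntegral.integral_const_mul] at him
  simp only [mul_assoc]
  linarith
open Function in
/-- The functional equation satisfied by the generating function of an invariant distribution. -/
theorem generating_function_equation {la1 la2 mu1 mu2 c1 c2 p1 p2 : ℝ} {π : ℕ × ℕ → ℝ}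
    (hπ : IsInvariantDist la1 la2 mu1 mu2 c1 c2 p1 p2 π) (hs : Summable π) {x y : ℂ}
    (hx : ‖x‖ ≤ 1) (hy : ‖y‖ ≤ 1) :
    (-(mu1 * c1) * x ^ 2 * y - mu2 * c2 * x * y ^ 2
        + (la1 + la2 + mu1 * c1 + mu2 * c2) * x * y - la1 * y - la2 * x)
        * (∑' m : ℕ × ℕ, (π m : ℂ) * (x ^ m.1 * y ^ m.2))
      = (la1 * y * (x - 1) - p1 * la1 * x * (y - 1)) * (∑' n : ℕ, (π (0, n) : ℂ) * y ^ n)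
        + (la2 * x * (y - 1) - p2 * la2 * y * (x - 1)) * (∑' n : ℕ, (π (n, 0) : ℂ) * x ^ n)
        + (p2 * la2 * y * (x - 1) + p1 * la1 * x * (y - 1)) * π (0, 0) := by
  obtain ⟨h0, -, hbal⟩ := hπ
  set w : ℕ × ℕ → ℂ := fun m => (π m : ℂ) * (x ^ m.1 * y ^ m.2) with hw
  have hsw : Summable w := by
    refine Summable.of_norm_bounded hs fun m => ?_
    rw [hw]
    simp only [norm_mul, norm_pow, Complex.norm_real, Real.norm_of_nonneg (h0 m)]
    exact mul_le_of_le_one_right (h0 m)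
      (mul_le_one₀ (pow_le_one₀ (norm_nonneg _) hx) (by positivity) (pow_le_one₀ (norm_nonneg _) hy))
  have ii : Injective (fun n : ℕ => ((0, n) : ℕ × ℕ)) := fun a b h => by simpa using h
  have jj : Injective (fun n : ℕ => ((n, 0) : ℕ × ℕ)) := fun a b h => by simpa using h
  have iS : Injective (fun m : ℕ × ℕ => (m.1 + 1, m.2)) := fun a b h => by
    ext <;> simp at h <;> simp [h]
  have jS : Injective (fun m : ℕ × ℕ => (m.1, m.2 + 1)) := fun a b h => by
    ext <;> simp at h <;> simp [h]
  have notS : ∀ m : ℕ × ℕ, m ∉ Set.range (fun m : ℕ × ℕ => (m.1 + 1, m.2)) → m.1 = 0 := by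
    rintro ⟨a, b⟩ h
    by_contra ha
    exact h ⟨(a - 1, b), by ext <;> simp; simp at ha; omega⟩
  have notS' : ∀ m : ℕ × ℕ, m ∉ Set.range (fun m : ℕ × ℕ => (m.1, m.2 + 1)) → m.2 = 0 := by
    rintro ⟨a, b⟩ h
    by_contra ha
    exact h ⟨(a, b - 1), by ext <;> simp; simp at ha; omega⟩
  set P := ∑' m, w m
  set F := ∑' n : ℕ, (π (0, n) : ℂ) * y ^ n
  set G := ∑' n : ℕ, (π (n, 0) : ℂ) * x ^ n
  have sP : HasSum w P := hsw.hasSum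
  have sF : HasSum (fun m : ℕ × ℕ => if m.1 = 0 then w m else 0) F := by
    refine (ii.hasSum_iff ?_).1 ?_
    · rintro ⟨a, b⟩ h
      exact if_neg fun ha => h ⟨b, by simp at ha; simp [ha]⟩
    · have := (hsw.comp_injective ii).hasSum
      simpa [hw, comp_def] using this
  have sG : HasSum (fun m : ℕ × ℕ => if m.2 = 0 then w m else 0) G := by
    refine (jj.hasSum_iff ?_).1 ?_
    · rintro ⟨a, b⟩ h
      exact if_neg fun ha => h ⟨a, by simp at ha; simp [ha]⟩
    · have := (hsw.comp_injective jj).hasSum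
      simpa [hw, comp_def] using this
  have s0 : HasSum (fun m : ℕ × ℕ => if m = (0, 0) then (π (0, 0) : ℂ) else 0) (π (0, 0) : ℂ) :=
    hasSum_ite_eq _ _
  have sS : HasSum (fun m : ℕ × ℕ => w (m.1 + 1, m.2)) (P - F) := by
    refine HasSum.congr_fun ((iS.hasSum_iff ?_).2 (sP.sub sF)) ?_
    · intro m hm; simp [notS m hm]
    · intro m; simp
  have sS' : HasSum (fun m : ℕ × ℕ => w (m.1, m.2 + 1)) (P - G) := by
    refine HasSum.congr_fun ((jS.hasSum_iff ?_).2 (sP.sub sG)) ?_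
    · intro m hm; simp [notS' m hm]
    · intro m; simp
  have sSG : HasSum (fun m : ℕ × ℕ => if m.2 = 0 then w (m.1 + 1, m.2) else 0)
      (G - π (0, 0)) := by
    refine HasSum.congr_fun ((iS.hasSum_iff ?_).2 (sG.sub s0)) ?_
    · rintro ⟨a, b⟩ hm
      have ha : a = 0 := notS _ hm
      by_cases hb : b = 0 <;> simp [ha, hb, hw]
    · intro m; simp
  have sSF : HasSum (fun m : ℕ × ℕ => if m.1 = 0 then w (m.1, m.2 + 1) else 0)
      (F - π (0, 0)) := by
    refine HasSum.congr_fun ((jS.hasSum_iff ?_).2 (sF.sub s0)) ?_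
    · rintro ⟨a, b⟩ hm
      have ha : b = 0 := notS' _ hm
      by_cases hb : a = 0 <;> simp [ha, hb, hw]
    · intro m; simp
  have sD : HasSum (fun m : ℕ × ℕ => if 0 < m.1 then w (m.1 - 1, m.2) else 0) P := by
    refine (iS.hasSum_iff ?_).1 ?_
    · intro m hm; simp [notS m hm]
    · simpa [comp_def] using sP
  have sD' : HasSum (fun m : ℕ × ℕ => if 0 < m.2 then w (m.1, m.2 - 1) else 0) P := by
    refine (jS.hasSum_iff ?_).1 ?_
    · intro m hm; simp [notS' m hm]
    · simpa [comp_def] using sP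
  have sL := ((((sP.mul_left (x * y * (mu1 * c1 + mu2 * c2 + la1 + la2))).add
    (sF.mul_left (x * y * (p1 * la1 - la1)))).add
    (sG.mul_left (x * y * (p2 * la2 - la2)))).sub
    (s0.mul_left (x * y * (p1 * la1 + p2 * la2))))
  have sR := (((((sD.mul_left (mu1 * c1 * x * x * y)).add (sD'.mul_left (mu2 * c2 * x * y * y))).add
    (sS.mul_left (la1 * y))).add (sSG.mul_left (p2 * la2 * y))).add
    (sS'.mul_left (la2 * x))).add (sSF.mul_left (p1 * la1 * x))
  have heq := sL.unique (HasSum.congr_fun sR ?_)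
  · linear_combination heq
  · rintro ⟨a, b⟩
    have hb := congrArg (fun t : ℝ => (t : ℂ)) (hbal a b)
    rcases Nat.eq_zero_or_pos a with rfl | ha
    · rcases Nat.eq_zero_or_pos b with rfl | hb'
      · simp [hw] at hb ⊢
        linear_combination x * y * hb
      · obtain ⟨b, rfl⟩ := Nat.exists_eq_add_of_lt hb'
        simp [hw] at hb ⊢
        linear_combination x * y * y ^ (b + 1) * hb
    · obtain ⟨a, rfl⟩ := Nat.exists_eq_add_of_lt ha
      rcases Nat.eq_zero_or_pos b with rfl | hb'
      · simp [hw] at hb ⊢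
        linear_combination x * y * x ^ (a + 1) * hb
      · obtain ⟨b, rfl⟩ := Nat.exists_eq_add_of_lt hb'
        simp [hw] at hb ⊢
        linear_combination x * y * x ^ (a + 1) * y ^ (b + 1) * hb

theorem IsInvariantDist.summable {la1 la2 mu1 mu2 c1 c2 p1 p2 : ℝ} {π : ℕ × ℕ → ℝ}
    (hπ : IsInvariantDist la1 la2 mu1 mu2 c1 c2 p1 p2 π) : Summable π := by
  by_contra h
  exact zero_ne_one ((tsum_eq_zero_of_not_summable h).symm.trans hπ.2.1)

/-- Exchanging the two coordinates of the walk. -/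
theorem IsInvariantDist.swap {la1 la2 mu1 mu2 c1 c2 p1 p2 : ℝ} {π : ℕ × ℕ → ℝ}
    (hπ : IsInvariantDist la1 la2 mu1 mu2 c1 c2 p1 p2 π) :
    IsInvariantDist la2 la1 mu2 mu1 c2 c1 p2 p1 (fun m => π m.swap) := by
  refine ⟨fun m => hπ.1 _, ?_, fun m1 m2 => ?_⟩
  · rw [← hπ.2.1]
    exact (Equiv.prodComm ℕ ℕ).tsum_eq π
  · have := hπ.2.2 m2 m1
    simp only [Prod.swap_prod_mk]
    linarith

theorem IsInvariantDist.zero_pos {la1 la2 mu1 mu2 c1 c2 p1 p2 : ℝ} (hla1 : 0 < la1)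
    (hla2 : 0 < la2) (hmu1 : 0 < mu1) (hmu2 : 0 < mu2) (hc1 : 0 < c1) (hc2 : 0 < c2)
    (hp1 : 0 ≤ p1) (hp2 : 0 ≤ p2) {π : ℕ × ℕ → ℝ}
    (hπ : IsInvariantDist la1 la2 mu1 mu2 c1 c2 p1 p2 π) : 0 < π (0, 0) := by
  obtain ⟨h0, h1, hbal⟩ := hπ
  refine (h0 _).lt_of_ne' fun hzero => ?_
  have step : ∀ m n, π (m, n) = 0 → π (m + 1, n) = 0 ∧ π (m, n + 1) = 0 := by
    intro m n hmn
    have hb := hbal m n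
    rw [hmn, zero_mul] at hb
    have t1 : 0 ≤ mu1 * c1 * π (m - 1, n) * (if 0 < m then 1 else 0) := by
      have := h0 (m - 1, n); split_ifs <;> positivity
    have t2 : 0 ≤ mu2 * c2 * π (m, n - 1) * (if 0 < n then 1 else 0) := by
      have := h0 (m, n - 1); split_ifs <;> positivity
    have k1 : 0 < la1 + p2 * la2 * (if n = 0 then 1 else 0) := by split_ifs <;> positivity
    have k2 : 0 < la2 + p1 * la1 * (if m = 0 then 1 else 0) := by split_ifs <;> positivity
    have t3 := mul_nonneg k1.le (h0 (m + 1, n))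
    have t4 := mul_nonneg k2.le (h0 (m, n + 1))
    exact ⟨(mul_eq_zero.1 (by linarith : _ * π (m + 1, n) = 0)).resolve_left k1.ne',
      (mul_eq_zero.1 (by linarith : _ * π (m, n + 1) = 0)).resolve_left k2.ne'⟩
  have row : ∀ m, π (m, 0) = 0 := fun m => by
    induction m with
    | zero => exact hzero
    | succ m ih => exact (step m 0 ih).1
  have all : ∀ m n, π (m, n) = 0 := fun m n => by
    induction n with
    | zero => exact row m
    | succ n ih => exact (step m n ih).2
  rw [show π = fun _ => 0 from funext fun m => all m.1 m.2, tsum_zero] at h1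
  exact zero_ne_one h1

theorem norm_mul_pow_le_of_mem_closedBall {a : ℝ} (ha : 0 ≤ a) {z : ℂ}
    (hz : z ∈ Metric.closedBall (0 : ℂ) 1) (n : ℕ) : ‖(a : ℂ) * z ^ n‖ ≤ a := by
  rw [norm_mul, norm_pow, Complex.norm_real, Real.norm_of_nonneg ha]
  exact mul_le_of_le_one_right ha (pow_le_one₀ (norm_nonneg _) (by simpa using hz))

/-- Equality of the mean rates in the second coordinate. -/
theorem IsInvariantDist.drift {la1 la2 mu1 mu2 c1 c2 p1 p2 : ℝ} {π : ℕ × ℕ → ℝ}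
    (hπ : IsInvariantDist la1 la2 mu1 mu2 c1 c2 p1 p2 π) :
    mu2 * c2 - la2 = p1 * la1 * (∑' n : ℕ, π (0, n)) - la2 * (∑' n : ℕ, π (n, 0))
      - p1 * la1 * π (0, 0) := by
  have hs := hπ.summable
  have hs0 : Summable fun n : ℕ => π (0, n) :=
    hs.comp_injective (i := fun n : ℕ => ((0, n) : ℕ × ℕ)) fun a b h => by simpa using h
  have heq : Set.EqOn
      (fun y : ℂ => (mu2 * c2 * y - la2) * (∑' m : ℕ × ℕ, (π m : ℂ) * y ^ m.2))
      (fun y : ℂ => p1 * la1 * (∑' n : ℕ, (π (0, n) : ℂ) * y ^ n)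
        - la2 * (∑' n : ℕ, (π (n, 0) : ℂ)) - p1 * la1 * π (0, 0)) (Metric.ball 0 1) := by
    intro y hy
    have hy1 : ‖y‖ < 1 := by simpa using hy
    have hne : 1 - y ≠ 0 := by
      intro h
      rw [← sub_eq_zero.1 h, norm_one] at hy1
      exact lt_irrefl _ hy1
    have h := generating_function_equation hπ hs (x := 1) (y := y) (by simp) hy1.le
    simp only [one_pow, one_mul, mul_one] at h
    refine mul_left_cancel₀ hne ?_
    linear_combination h
  have hcl := heq.of_subset_closure (t := Metric.closedBall 0 1) ?_ ?_
    Metric.ball_subset_closedBall (by rw [closure_ball _ one_ne_zero])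
  · have h1 := hcl (show (1 : ℂ) ∈ Metric.closedBall 0 1 by simp)
    simp only [one_pow, mul_one, ← Complex.ofReal_tsum] at h1
    rw [hπ.2.1] at h1
    exact_mod_cast (by simpa using h1 :
      (mu2 * c2 - la2 : ℂ) = p1 * la1 * (∑' n : ℕ, π (0, n) : ℝ) - la2 * (∑' n : ℕ, π (n, 0) : ℝ)
      - p1 * la1 * π (0, 0))
  · refine ContinuousOn.mul (by fun_prop) (continuousOn_tsum (fun m => by fun_prop) hs ?_)
    exact fun m y hy => norm_mul_pow_le_of_mem_closedBall (hπ.1 m) hy _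
  · refine ContinuousOn.sub (ContinuousOn.sub (ContinuousOn.mul (by fun_prop)
      (continuousOn_tsum (fun m => by fun_prop) hs0 ?_)) (by fun_prop)) (by fun_prop)
    exact fun m y hy => norm_mul_pow_le_of_mem_closedBall (hπ.1 _) hy _

/-- The smaller root of `a x² + l = b x`. -/
noncomputable def smallRoot (a l b : ℝ) : ℝ := (b - √(b ^ 2 - 4 * a * l)) / (2 * a)

section smallRoot

variable {a l b : ℝ}

theorem smallRoot_disc_pos (ha : 0 < a) (hal : a < l) (hb : a + l < b) :
    0 < b ^ 2 - 4 * a * l := by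
  nlinarith [sq_nonneg (a - l)]

theorem smallRoot_eq (ha : 0 < a) (hal : a < l) (hb : a + l < b) :
    a * smallRoot a l b ^ 2 + l = b * smallRoot a l b := by
  have hsq := Real.sq_sqrt (smallRoot_disc_pos ha hal hb).le
  unfold smallRoot
  generalize √(b ^ 2 - 4 * a * l) = t at hsq
  field_simp
  linear_combination hsq

theorem smallRoot_pos (ha : 0 < a) (hal : a < l) (hb : a + l < b) : 0 < smallRoot a l b := by
  refine div_pos (sub_pos.2 ?_) (by positivity)
  rw [Real.sqrt_lt' (by linarith)]
  nlinarith

theorem smallRoot_lt_one (ha : 0 < a) (hb : a + l < b) : smallRoot a l b < 1 := by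
  rw [smallRoot, div_lt_one (by positivity), sub_lt_comm]
  refine Real.lt_sqrt_of_sq_lt ?_
  nlinarith

theorem eq_smallRoot (ha : 0 < a) (hal : a < l) (hb : a + l < b) {x : ℝ}
    (hx1 : x < 1) (hx : a * x ^ 2 + l = b * x) : x = smallRoot a l b := by
  have h := smallRoot_eq ha hal hb
  have h0 := smallRoot_pos ha hal hb
  have h1 := smallRoot_lt_one ha hb
  set z := smallRoot a l b
  have hprod : (x - z) * (a * (x + z) - b) = 0 := by linear_combination hx - h
  rcases mul_eq_zero.1 hprod with h' | h'
  · linarith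
  · have : l = a * (x * z) := by linear_combination hx - x * h'
    have hxz : x * z < 1 := by nlinarith
    nlinarith

theorem hasDerivAt_smallRoot (ha : 0 < a) (hal : a < l) (hb : a + l < b) :
    HasDerivAt (smallRoot a l)
      (-(smallRoot a l b ^ 2) / (l - a * smallRoot a l b ^ 2)) b := by
  have hd := smallRoot_disc_pos ha hal hb
  have hsqrt : √(b ^ 2 - 4 * a * l) = b - 2 * a * smallRoot a l b := by
    unfold smallRoot; field_simp; ring
  have hspos : 0 < b - 2 * a * smallRoot a l b := hsqrt ▸ Real.sqrt_pos.2 hd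
  have hder : HasDerivAt (smallRoot a l) ((1 - (2 * b) / (2 * √(b ^ 2 - 4 * a * l))) / (2 * a)) b := by
    have h2 : HasDerivAt (fun t : ℝ => t ^ 2 - 4 * a * l) (2 * b) b := by
      simpa using (hasDerivAt_pow 2 b).sub_const (4 * a * l)
    exact ((hasDerivAt_id b).sub (h2.sqrt hd.ne')).div_const (2 * a)
  have heq := smallRoot_eq ha hal hb
  have h0 := smallRoot_pos ha hal hb
  convert hder using 1
  rw [hsqrt]
  set z := smallRoot a l b
  have hlz : l - a * z ^ 2 = z * (b - 2 * a * z) := by linear_combination heq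
  rw [hlz]
  obtain ⟨d, hd⟩ : ∃ d, d = b - 2 * a * z := ⟨_, rfl⟩
  rw [← hd] at hspos ⊢
  rw [show b = d + 2 * a * z by rw [hd]; ring]
  field_simp
  ring

end smallRoot

theorem arg_eq_arctan_of_re_pos {z : ℂ} (hz : 0 < z.re) : z.arg = Real.arctan (z.im / z.re) := by
  have h := abs_lt.1 (Complex.abs_arg_lt_pi_div_two_iff.2 (Or.inl hz))
  rw [← Complex.tan_arg, Real.arctan_tan h.1 h.2]

theorem boundary_argument {a1 a2 la1 la2 p1 p2 r x θ K : ℝ} {H : ℂ}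
    (ha2 : 0 < a2) (hx1 : x < 1) (hK : 0 < K) (hr : a2 * r ^ 2 = la2)
    (hroot : a1 * x ^ 2 + la1 = (la1 + la2 + a1 + a2 - 2 * a2 * r * Real.cos θ) * x) {D : ℝ}
    (hD : D = (1 - p1 * p2) * (a1 * x ^ 2 - (la1 + la2 + a1 + a2) * x + la1)
      - 2 * (p1 * a1 * (1 - p2) * x ^ 2
        + (p1 * p2 * (a1 + a2) - (1 - p2) * (la2 + la1 * p1)) * x - p2 * (la2 + la1 * p1)))
    (hDpos : 0 < D)
    (hrel : (circleMap 0 r θ * (x - 1) - p1 * x * (circleMap 0 r θ - 1)) * H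
      + (x * (circleMap 0 r θ - 1) - p2 * circleMap 0 r θ * (x - 1)) * K = 0) :
    0 < H.re ∧ H.arg = Real.arctan ((1 - p1 * p2) * (2 * a2 * r * x * Real.sin θ) / D) := by
  have hre : (circleMap 0 r θ).re = r * Real.cos θ := by
    simp [circleMap, Complex.exp_re]
  have him : (circleMap 0 r θ).im = r * Real.sin θ := by
    simp [circleMap, Complex.exp_im]
  have e1 := congrArg Complex.re hrel
  have e2 := congrArg Complex.im hrel
  simp [hre, him] at e1 e2
  have hcs := Real.sin_sq_add_cos_sq θ
  generalize Real.cos θ = c at *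
  generalize Real.sin θ = s at *
  obtain ⟨q1, hq1⟩ : ∃ q, q = p1 * x * (r * c - 1) - (x - 1) * (r * c) := ⟨_, rfl⟩
  obtain ⟨q2, hq2⟩ : ∃ q, q = (p1 * x - x + 1) * (r * s) := ⟨_, rfl⟩
  obtain ⟨b1, hb1⟩ : ∃ q, q = x * (r * c - 1) - p2 * (x - 1) * (r * c) := ⟨_, rfl⟩
  obtain ⟨b2, hb2⟩ : ∃ q, q = (x - p2 * (x - 1)) * (r * s) := ⟨_, rfl⟩
  have e1' : q1 * H.re - q2 * H.im = b1 * K := by rw [hq1, hq2, hb1]; linear_combination -e1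
  have e2' : q1 * H.im + q2 * H.re = b2 * K := by rw [hq1, hq2, hb2]; linear_combination -e2
  have f1 : (q1 ^ 2 + q2 ^ 2) * H.re = K * (b1 * q1 + b2 * q2) := by
    linear_combination q1 * e1' + q2 * e2'
  have f2 : (q1 ^ 2 + q2 ^ 2) * H.im = K * (b2 * q1 - b1 * q2) := by
    linear_combination q1 * e2' - q2 * e1'
  have gim : b2 * q1 - b1 * q2 = (1 - p1 * p2) * x * (1 - x) * (r * s) := by
    rw [hq1, hq2, hb1, hb2]; ring
  have gre : 2 * a2 * (b1 * q1 + b2 * q2) = (1 - x) * D := by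
    rw [hq1, hq2, hb1, hb2, hD]
    subst hr
    linear_combination (2 * a2 * r ^ 2 * (x - p2 * (x - 1)) * (p1 * x - x + 1)) * hcs
      + (-2 * p1 * x - (1 - x) * (1 + p1 * p2)) * hroot
  have hx' : 0 < 1 - x := by linarith
  have hb : 0 < b1 * q1 + b2 * q2 := by
    have : 0 < 2 * a2 * (b1 * q1 + b2 * q2) := by rw [gre]; positivity
    exact (pos_iff_pos_of_mul_pos this).1 (by positivity)
  have hHre : 0 < H.re := by
    have : 0 < (q1 ^ 2 + q2 ^ 2) * H.re := by rw [f1]; positivity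
    exact pos_of_mul_pos_right this (by positivity)
  have hN : 0 < q1 ^ 2 + q2 ^ 2 := by
    have : 0 < (q1 ^ 2 + q2 ^ 2) * H.re := by rw [f1]; positivity
    exact pos_of_mul_pos_left this hHre.le
  refine ⟨hHre, ?_⟩
  rw [arg_eq_arctan_of_re_pos hHre]
  congr 1
  rw [div_eq_div_iff hHre.ne' hDpos.ne']
  refine mul_left_cancel₀ (mul_pos hN hx').ne' ?_
  rw [gim] at f2
  linear_combination (1 - x) * D * f2 - (1 - x) * (1 - p1 * p2) * (2 * a2 * r * x * s) * f1
    - K * (1 - p1 * p2) * x * (1 - x) * (r * s) * gre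

theorem boundary_denominator_pos {a1 a2 la1 la2 p1 p2 r x c : ℝ}
    (ha1 : 0 < a1) (ha2 : 0 < a2) (hr0 : 0 < r) (hr1 : r < 1) (hr : a2 * r ^ 2 = la2)
    (hp1 : 0 < p1) (hp1' : p1 ≤ 1) (hp2 : 0 ≤ p2) (hp2' : p2 ≤ 1)
    (hE2 : a1 * p1 + a2 < la1 * p1 + la2) (hx0 : 0 < x) (hx1 : x < 1) (hc : c ≤ 1)
    (hroot : a1 * x ^ 2 + la1 = (la1 + la2 + a1 + a2 - 2 * a2 * r * c) * x) :
    0 < (1 - p1 * p2) * (a1 * x ^ 2 - (la1 + la2 + a1 + a2) * x + la1)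
      - 2 * (p1 * a1 * (1 - p2) * x ^ 2
        + (p1 * p2 * (a1 + a2) - (1 - p2) * (la2 + la1 * p1)) * x - p2 * (la2 + la1 * p1)) := by
  have hform : (1 - p1 * p2) * (a1 * x ^ 2 - (la1 + la2 + a1 + a2) * x + la1)
      - 2 * (p1 * a1 * (1 - p2) * x ^ 2
        + (p1 * p2 * (a1 + a2) - (1 - p2) * (la2 + la1 * p1)) * x - p2 * (la2 + la1 * p1))
      = 2 * x * (p1 * (la1 - a1 * x) - (a2 - la2)) + 2 * x * a2 * (1 - r) * (1 - r * (p1 * p2))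
        + 2 * x * (1 + p1 * p2) * (a2 * r * (1 - c)) + 2 * p2 * la2 * (1 - x) := by
    subst hr
    linear_combination (1 + p1 * p2) * hroot
  have hpp : p1 * p2 ≤ 1 := mul_le_one₀ hp1' hp2 hp2'
  have hla2 : 0 < la2 := hr ▸ by positivity
  have h1 : 0 < p1 * (la1 - a1 * x) - (a2 - la2) := by
    nlinarith [mul_pos (mul_pos hp1 ha1) (sub_pos.2 hx1)]
  have h2 : 0 < 1 - r * (p1 * p2) := by nlinarith
  have h3 : 0 < 1 - r := by linarith
  have h4 : 0 ≤ 1 - c := by linarith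
  have h5 : 0 < 1 - x := by linarith
  rw [hform]
  positivity

/-- The value of `a₁ x + λ₁ / x` at the point `x` attached to the boundary point of angle `θ`. -/
noncomputable def boundaryParam (la1 la2 a1 a2 r θ : ℝ) : ℝ :=
  la1 + la2 + a1 + a2 - 2 * a2 * r * Real.cos θ

theorem lt_boundaryParam {la1 la2 a1 a2 r : ℝ} (ha2 : 0 < a2) (hr0 : 0 < r) (hr1 : r < 1)
    (hr : a2 * r ^ 2 = la2) (θ : ℝ) : a1 + la1 < boundaryParam la1 la2 a1 a2 r θ := by
  have h := mul_pos ha2 (one_sub_two_mul_cos_add_sq_pos hr0.le hr1 θ)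
  unfold boundaryParam
  rw [← hr]
  linarith

/-- The endpoints of the cut are the boundary points of angle `π` and `0`. -/
theorem cut_endpoints {la1 la2 a1 a2 r x1 x2 : ℝ} (ha1 : 0 < a1) (ha2 : 0 < a2)
    (hal : a1 < la1) (hr0 : 0 < r) (hr1 : r < 1) (hr : a2 * r ^ 2 = la2)
    (hx1 : 0 < x1) (hx12 : x1 < x2) (hx2 : x2 < 1)
    (hD1 : (a1 * x1 ^ 2 - (la1 + la2 + a1 + a2) * x1 + la1) ^ 2 - 4 * a2 * la2 * x1 ^ 2 = 0)
    (hD2 : (a1 * x2 ^ 2 - (la1 + la2 + a1 + a2) * x2 + la1) ^ 2 - 4 * a2 * la2 * x2 ^ 2 = 0) :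
    smallRoot a1 la1 (boundaryParam la1 la2 a1 a2 r Real.pi) = x1 ∧
      smallRoot a1 la1 (boundaryParam la1 la2 a1 a2 r 0) = x2 := by
  have factor : ∀ x, (a1 * x ^ 2 - (la1 + la2 + a1 + a2) * x + la1) ^ 2 - 4 * a2 * la2 * x ^ 2 = 0 →
      a1 * x ^ 2 - (la1 + la2 + a1 + a2) * x + la1 = 2 * a2 * r * x ∨
      a1 * x ^ 2 - (la1 + la2 + a1 + a2) * x + la1 = -(2 * a2 * r * x) := by
    intro x hx
    refine sq_eq_sq_iff_eq_or_eq_neg.1 ?_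
    linear_combination hx - 4 * a2 * x ^ 2 * hr
  have hx2' : 0 < x2 := hx1.trans hx12
  have hmono : 0 < (x2 - x1) * (la1 - a1 * (x1 * x2)) := by
    have : x1 * x2 < 1 := by nlinarith
    exact mul_pos (by linarith) (by nlinarith)
  have hpos : 0 < 2 * a2 * r * (x1 * x2) := by positivity
  have key : a1 * x1 ^ 2 - (la1 + la2 + a1 + a2) * x1 + la1 = 2 * a2 * r * x1 ∧
      a1 * x2 ^ 2 - (la1 + la2 + a1 + a2) * x2 + la1 = -(2 * a2 * r * x2) := by
    have hid : (x2 - x1) * (la1 - a1 * (x1 * x2))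
        = (a1 * x1 ^ 2 - (la1 + la2 + a1 + a2) * x1 + la1) * x2
          - (a1 * x2 ^ 2 - (la1 + la2 + a1 + a2) * x2 + la1) * x1 := by ring
    rw [hid] at hmono
    rcases factor x1 hD1 with h1 | h1 <;> rcases factor x2 hD2 with h2 | h2
    · rw [h1, h2] at hmono; linarith
    · exact ⟨h1, h2⟩
    · rw [h1, h2] at hmono; linarith
    · rw [h1, h2] at hmono; linarith
  constructor
  · refine (eq_smallRoot ha1 hal (lt_boundaryParam ha2 hr0 hr1 hr _) (hx12.trans hx2) ?_).symm
    rw [boundaryParam, Real.cos_pi]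
    linear_combination key.1
  · refine (eq_smallRoot ha1 hal (lt_boundaryParam ha2 hr0 hr1 hr _) hx2 ?_).symm
    rw [boundaryParam, Real.cos_zero]
    linear_combination key.2

theorem integral_zero_two_pi_of_reflection {f : ℝ → ℝ} (hf : Continuous f)
    (hsymm : ∀ θ, f (2 * Real.pi - θ) = f θ) :
    ∫ θ in 0..2 * Real.pi, f θ = 2 * ∫ θ in 0..Real.pi, f θ := by
  rw [← intervalIntegral.integral_add_adjacent_intervals (hf.intervalIntegrable 0 Real.pi)
    (hf.intervalIntegrable Real.pi (2 * Real.pi))]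
  have h := intervalIntegral.integral_comp_sub_left (a := 0) (b := Real.pi) f (2 * Real.pi)
  simp only [hsymm, sub_zero] at h
  rw [show 2 * Real.pi - Real.pi = Real.pi by ring] at h
  rw [← h]
  ring

theorem integral_boundary_argument {la1 la2 mu1 mu2 c1 c2 p1 p2 r x1 x2 : ℝ}
    (ha1 : 0 < mu1 * c1) (ha2 : 0 < mu2 * c2) (hal : mu1 * c1 < la1)
    (hr0 : 0 < r) (hr1 : r < 1) (hr : mu2 * c2 * r ^ 2 = la2)
    (hx1 : 0 < x1) (hx12 : x1 < x2) (hx2 : x2 < 1)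
    (hD1 : Delta2 la1 la2 mu1 mu2 c1 c2 x1 = 0) (hD2 : Delta2 la1 la2 mu1 mu2 c1 c2 x2 = 0)
    {X D : ℝ → ℝ}
    (hX : X = fun θ => smallRoot (mu1 * c1) la1 (boundaryParam la1 la2 (mu1 * c1) (mu2 * c2) r θ))
    (hD : D = fun x =>
      (1 - p1 * p2) * (mu1 * c1 * x ^ 2 - (la1 + la2 + mu1 * c1 + mu2 * c2) * x + la1)
        - 2 * RY la1 la2 mu1 mu2 c1 c2 p1 p2 x)
    (hDpos : ∀ θ, 0 < D (X θ)) :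
    ∫ θ in 0..2 * Real.pi, r * Real.sin θ / (1 - 2 * r * Real.cos θ + r ^ 2)
        * Real.arctan ((1 - p1 * p2) * (2 * (mu2 * c2) * r * X θ * Real.sin θ) / D (X θ))
      = ∫ x in x1..x2, (mu1 * c1 * x ^ 2 - la1) * ThetaY la1 la2 mu1 mu2 c1 c2 p1 p2 x
          / (x * h1r la1 la2 mu1 mu2 c1 c2 x 1) := by
  have hb := fun θ => lt_boundaryParam (la1 := la1) (a1 := mu1 * c1) ha2 hr0 hr1 hr θ
  have hX0 : ∀ θ, 0 < X θ := fun θ => hX ▸ smallRoot_pos ha1 hal (hb θ)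
  have hX1 : ∀ θ, X θ < 1 := fun θ => hX ▸ smallRoot_lt_one ha1 (hb θ)
  have hXeq : ∀ θ, mu1 * c1 * X θ ^ 2 + la1
      = (la1 + la2 + mu1 * c1 + mu2 * c2 - 2 * (mu2 * c2) * r * Real.cos θ) * X θ :=
    fun θ => hX ▸ smallRoot_eq ha1 hal (hb θ)
  have hlX : ∀ θ, 0 < la1 - mu1 * c1 * X θ ^ 2 := fun θ => by
    have := pow_lt_one₀ (hX0 θ).le (hX1 θ) two_ne_zero
    nlinarith
  have hlX' : ∀ θ, 0 < la1 - mu1 * c1 * X θ := fun θ => by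
    nlinarith [hX1 θ]
  have hXd : ∀ θ, HasDerivAt X (-(X θ ^ 2) / (la1 - mu1 * c1 * X θ ^ 2)
      * (2 * (mu2 * c2) * r * Real.sin θ)) θ := fun θ => by
    have h1 : HasDerivAt (boundaryParam la1 la2 (mu1 * c1) (mu2 * c2) r)
        (2 * (mu2 * c2) * r * Real.sin θ) θ := by
      have := ((Real.hasDerivAt_cos θ).const_mul (2 * (mu2 * c2) * r)).const_sub
        (la1 + la2 + mu1 * c1 + mu2 * c2)
      rwa [mul_neg, neg_neg] at this
    subst hX
    exact (hasDerivAt_smallRoot ha1 hal (hb θ)).comp θ h1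
  have hXc : Continuous X := continuous_iff_continuousAt.2 fun θ => (hXd θ).continuousAt
  have hDc : Continuous D := by rw [hD]; unfold RY; fun_prop
  have hh1 : ∀ x, h1r la1 la2 mu1 mu2 c1 c2 x 1 = -((1 - x) * (la1 - mu1 * c1 * x)) := fun x => by
    unfold h1r; ring
  have hden := one_sub_two_mul_cos_add_sq_pos hr0.le hr1
  have hends := cut_endpoints ha1 ha2 hal hr0 hr1 hr hx1 hx12 hx2
    (by rw [← hD1, Delta2]; ring) (by rw [← hD2, Delta2]; ring)
  have hXpi : X Real.pi = x1 := hX ▸ hends.1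
  have hXzero : X 0 = x2 := hX ▸ hends.2
  have hsubst := intervalIntegral.integral_comp_mul_deriv'' (a := 0) (b := Real.pi) (f := X)
    (f' := fun θ => -(X θ ^ 2) / (la1 - mu1 * c1 * X θ ^ 2) * (2 * (mu2 * c2) * r * Real.sin θ))
    (g := fun x => (mu1 * c1 * x ^ 2 - la1) * ThetaY la1 la2 mu1 mu2 c1 c2 p1 p2 x
          / (x * h1r la1 la2 mu1 mu2 c1 c2 x 1)) hXc.continuousOn
    (fun θ _ => (hXd θ).hasDerivWithinAt)
    (Continuous.continuousOn (by
      refine Continuous.mul (Continuous.div (by fun_prop) (by fun_prop) fun θ => (hlX θ).ne')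
        (by fun_prop)))
    (by
      refine ContinuousOn.div (ContinuousOn.mul (by fun_prop) ?_) ?_ ?_
      · refine Real.continuous_arctan.comp_continuousOn (ContinuousOn.div ?_ ?_ ?_)
        · unfold Delta2; fun_prop
        · rw [← hD]; exact hDc.continuousOn
        · rintro _ ⟨θ, -, rfl⟩
          have := (hDpos θ).ne'
          rwa [hD] at this
      · unfold h1r; fun_prop
      · rintro _ ⟨θ, -, rfl⟩
        rw [hh1]
        have := hX0 θ
        have := hlX' θ
        have : 0 < 1 - X θ := by linarith [hX1 θ]
        exact mul_ne_zero (by positivity) (neg_ne_zero.2 (by positivity)))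
  rw [hXpi, hXzero, intervalIntegral.integral_symm x1 x2] at hsubst
  rw [integral_zero_two_pi_of_reflection]
  · rw [eq_comm, ← neg_eq_iff_eq_neg.2 hsubst, ← intervalIntegral.integral_neg,
      ← intervalIntegral.integral_const_mul]
    refine intervalIntegral.integral_congr fun θ hθ => ?_
    rw [Set.uIcc_of_le Real.pi_pos.le] at hθ
    have hsin : 0 ≤ Real.sin θ := Real.sin_nonneg_of_mem_Icc hθ
    have hTheta : ThetaY la1 la2 mu1 mu2 c1 c2 p1 p2 (X θ)
        = Real.arctan ((1 - p1 * p2) * (2 * (mu2 * c2) * r * X θ * Real.sin θ) / D (X θ)) := by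
      have hsq : -Delta2 la1 la2 mu1 mu2 c1 c2 (X θ)
          = (2 * (mu2 * c2) * r * X θ * Real.sin θ) ^ 2 := by
        unfold Delta2
        have hcs := Real.sin_sq_add_cos_sq θ
        rw [show mu1 * c1 * X θ ^ 2 - (la1 + la2 + mu1 * c1 + mu2 * c2) * X θ + la1
          = -(2 * (mu2 * c2) * r * Real.cos θ * X θ) by linear_combination hXeq θ]
        linear_combination -4 * mu2 * c2 * X θ ^ 2 * hr
          - 4 * (mu2 * c2) ^ 2 * r ^ 2 * X θ ^ 2 * hcs
      have := hX0 θ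
      rw [ThetaY, hsq, Real.sqrt_sq (by positivity), hD]
    simp only [Function.comp]
    rw [hTheta, hh1]
    have hk : mu2 * c2 * (1 - 2 * r * Real.cos θ + r ^ 2) * X θ
        = (1 - X θ) * (la1 - mu1 * c1 * X θ) := by
      linear_combination X θ * hr - hXeq θ
    have h1 := (hX0 θ).ne'
    have h2 := (hlX θ).ne'
    have h3 := (hlX' θ).ne'
    have h4 : 1 - X θ ≠ 0 := by linarith [hX1 θ]
    have h5 := (hden θ).ne'
    generalize Real.arctan ((1 - p1 * p2) * (2 * (mu2 * c2) * r * X θ * Real.sin θ) / D (X θ)) = V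
    have h6 : (mu1 * c1 * X θ ^ 2 - la1) * V / (X θ * -((1 - X θ) * (la1 - mu1 * c1 * X θ)))
        * (-(X θ ^ 2) / (la1 - mu1 * c1 * X θ ^ 2) * (2 * (mu2 * c2) * r * Real.sin θ))
        = -(2 * (mu2 * c2) * r * Real.sin θ * X θ * V / ((1 - X θ) * (la1 - mu1 * c1 * X θ))) := by
      field_simp
      ring
    have h7 := left_ne_zero_of_mul ha2.ne'
    have h8 := right_ne_zero_of_mul ha2.ne'
    rw [h6, ← hk]
    field_simp
  · refine Continuous.mul (Continuous.div (by fun_prop) (by fun_prop) fun θ => (hden θ).ne')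
      (Real.continuous_arctan.comp (Continuous.div (by fun_prop) (by fun_prop)
        fun θ => (hDpos θ).ne'))
  · intro θ
    have hXs : X (2 * Real.pi - θ) = X θ := by
      simp only [hX, boundaryParam, Real.cos_two_pi_sub]
    simp only [hXs, Real.sin_two_pi_sub, Real.cos_two_pi_sub]
    simp only [mul_neg, neg_div, Real.arctan_neg, neg_mul, neg_neg]

theorem differentiableOn_powerSeries {a : ℕ → ℝ} (ha0 : ∀ n, 0 ≤ a n) (ha : Summable a) :
    DifferentiableOn ℂ (fun y : ℂ => ∑' n, (a n : ℂ) * y ^ n) (Metric.ball 0 1) :=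
  Complex.differentiableOn_tsum_of_summable_norm ha (fun n => by fun_prop) Metric.isOpen_ball
    fun n _ hy => norm_mul_pow_le_of_mem_closedBall (ha0 n) (Metric.ball_subset_closedBall hy) n

theorem stmt17 (la1 la2 mu1 mu2 c1 c2 p1 p2 x1 x2 : ℝ)
    (hla1 : 0 < la1) (hla2 : 0 < la2) (hmu1 : 0 < mu1) (hmu2 : 0 < mu2)
    (hc1 : 0 < c1) (hc2 : 0 < c2)
    (hp1pos : 0 < p1) (hp1' : p1 ≤ 1) (hp2 : 0 ≤ p2) (hp2' : p2 ≤ 1)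
    (hp : p1 * p2 < 1)
    (hE1 : la2 < mu2 * c2) (hE2 : mu1 * c1 * p1 + mu2 * c2 < la1 * p1 + la2)
    (hx1 : 0 < x1) (hx12 : x1 < x2) (hx2 : x2 < 1)
    (hD1 : Delta2 la1 la2 mu1 mu2 c1 c2 x1 = 0)
    (hD2 : Delta2 la1 la2 mu1 mu2 c1 c2 x2 = 0)
    (hDneg : ∀ x ∈ Set.Ioo x1 x2, Delta2 la1 la2 mu1 mu2 c1 c2 x < 0)
    (π : ℕ × ℕ → ℝ) (hπ : IsInvariantDist la1 la2 mu1 mu2 c1 c2 p1 p2 π) :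
    π (0, 0) = (la2 + la1 * p1 - mu1 * c1 * p1 - mu2 * c2)
        / (p1 * (la1 + la2 * p2) * phiY1 la1 la2 mu1 mu2 c1 c2 p1 p2 x1 x2) := by
  have ha1 : 0 < mu1 * c1 := mul_pos hmu1 hc1
  have ha2 : 0 < mu2 * c2 := mul_pos hmu2 hc2
  have hal : mu1 * c1 < la1 := by
    by_contra! h
    nlinarith [mul_le_mul_of_nonneg_right h hp1pos.le]
  obtain ⟨r, hr0, hr1, hr⟩ : ∃ r : ℝ, 0 < r ∧ r < 1 ∧ mu2 * c2 * r ^ 2 = la2 := by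
    refine ⟨√(la2 / (mu2 * c2)), by positivity, ?_, ?_⟩
    · rw [Real.sqrt_lt' one_pos, one_pow, div_lt_one ha2]; exact hE1
    · rw [Real.sq_sqrt (by positivity)]; field_simp
  have hs := hπ.summable
  have hs0 : Summable fun n : ℕ => π (0, n) :=
    hs.comp_injective (i := fun n : ℕ => ((0, n) : ℕ × ℕ)) fun a b h => by simpa using h
  have hπ0 : 0 < π (0, 0) := hπ.zero_pos hla1 hla2 hmu1 hmu2 hc1 hc2 hp1pos.le hp2
  have hpp : 0 < 1 - p1 * p2 := by linarith
  obtain ⟨X, hX⟩ : ∃ X : ℝ → ℝ, X = fun θ => smallRoot (mu1 * c1) la1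
    (boundaryParam la1 la2 (mu1 * c1) (mu2 * c2) r θ) := ⟨_, rfl⟩
  obtain ⟨D, hD⟩ : ∃ D : ℝ → ℝ, D = fun x =>
      (1 - p1 * p2) * (mu1 * c1 * x ^ 2 - (la1 + la2 + mu1 * c1 + mu2 * c2) * x + la1)
        - 2 * RY la1 la2 mu1 mu2 c1 c2 p1 p2 x := ⟨_, rfl⟩
  have hb := fun θ => lt_boundaryParam (la1 := la1) (a1 := mu1 * c1) ha2 hr0 hr1 hr θ
  have hX0 : ∀ θ, 0 < X θ := fun θ => hX ▸ smallRoot_pos ha1 hal (hb θ)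
  have hX1 : ∀ θ, X θ < 1 := fun θ => hX ▸ smallRoot_lt_one ha1 (hb θ)
  have hXeq : ∀ θ, mu1 * c1 * X θ ^ 2 + la1
      = (la1 + la2 + mu1 * c1 + mu2 * c2 - 2 * (mu2 * c2) * r * Real.cos θ) * X θ :=
    fun θ => hX ▸ smallRoot_eq ha1 hal (hb θ)
  have hDx : ∀ x, D x = (1 - p1 * p2) * (mu1 * c1 * x ^ 2 - (la1 + la2 + mu1 * c1 + mu2 * c2) * x + la1)
      - 2 * (p1 * (mu1 * c1) * (1 - p2) * x ^ 2
        + (p1 * p2 * (mu1 * c1 + mu2 * c2) - (1 - p2) * (la2 + la1 * p1)) * x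
        - p2 * (la2 + la1 * p1)) := fun x => by
    simp only [hD, RY]; ring
  have hDpos : ∀ θ, 0 < D (X θ) := fun θ => by
    rw [hDx]
    exact boundary_denominator_pos ha1 ha2 hr0 hr1 hr hp1pos hp1' hp2 hp2' hE2 (hX0 θ) (hX1 θ)
      (Real.cos_le_one θ) (hXeq θ)
  set H : ℂ → ℂ := fun y => (la1 * (1 - p1 * p2) : ℂ) * (∑' n : ℕ, (π (0, n) : ℂ) * y ^ n)
    + p2 * (la2 + p1 * la1) * π (0, 0) with hH
  have hHdiff : DiffContOnCl ℂ H (Metric.ball 0 r) := by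
    refine DifferentiableOn.diffContOnCl_ball (U := Metric.ball 0 1) ?_
      (Metric.closedBall_subset_ball hr1)
    exact ((differentiableOn_powerSeries (fun n => hπ.1 (0, n)) hs0).const_mul _).add_const _
  have hbdry : ∀ θ, 0 < (H (circleMap 0 r θ)).re ∧ (H (circleMap 0 r θ)).arg
      = Real.arctan ((1 - p1 * p2) * (2 * (mu2 * c2) * r * X θ * Real.sin θ) / D (X θ)) := by
    intro θ
    have hG : 0 ≤ ∑' n : ℕ, π (n, 0) * X θ ^ n :=
      tsum_nonneg fun n => mul_nonneg (hπ.1 _) (pow_nonneg (hX0 θ).le _)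
    refine boundary_argument (K := la2 * (1 - p1 * p2) * (∑' n : ℕ, π (n, 0) * X θ ^ n)
      + p1 * (la1 + p2 * la2) * π (0, 0)) ha2 (hX1 θ) (by positivity) hr (hXeq θ) (hDx _) (hDpos θ) ?_
    have hynorm : ‖circleMap 0 r θ‖ = r := by simp [abs_of_pos hr0]
    have hfe := generating_function_equation hπ hs (x := (X θ : ℂ)) (y := circleMap 0 r θ)
      (by rw [Complex.norm_real, Real.norm_of_nonneg (hX0 θ).le]; exact (hX1 θ).le)
      (by rw [hynorm]; exact hr1.le)
    have hker : (-(mu1 * c1) * (X θ : ℂ) ^ 2 * circleMap 0 r θ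
        - mu2 * c2 * X θ * circleMap 0 r θ ^ 2
        + (la1 + la2 + mu1 * c1 + mu2 * c2) * X θ * circleMap 0 r θ - la1 * circleMap 0 r θ
        - la2 * X θ : ℂ) = 0 := by
      have hroot := congrArg (fun t : ℝ => (t : ℂ)) (hXeq θ)
      have hr' := congrArg (fun t : ℝ => (t : ℂ)) hr
      have hcs : (Real.sin θ : ℂ) ^ 2 + (Real.cos θ : ℂ) ^ 2 = 1 := by
        exact_mod_cast Real.sin_sq_add_cos_sq θ
      have hye : circleMap 0 r θ ^ 2 - 2 * r * Real.cos θ * circleMap 0 r θ + (r : ℂ) ^ 2 = 0 := by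
        rw [circleMap, Complex.exp_mul_I, ← Complex.ofReal_cos, ← Complex.ofReal_sin]
        linear_combination ((r : ℂ) ^ 2 * (Real.sin θ : ℂ) ^ 2) * Complex.I_sq
          - (r : ℂ) ^ 2 * hcs
      push_cast at hroot hr' hye
      linear_combination -circleMap 0 r θ * hroot - mu2 * c2 * X θ * hye + X θ * hr'
    rw [hker, zero_mul] at hfe
    simp only [hH]
    push_cast
    linear_combination -(1 - p1 * p2 : ℂ) * hfe
  have hlog := log_norm_sub_log_norm_eq_integral_arg hr0 hr1 hHdiff (fun z hz => by
    obtain ⟨θ, rfl⟩ : z ∈ Set.range (circleMap 0 r) := by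
      rwa [range_circleMap, abs_of_pos hr0]
    exact (hbdry θ).1)
  simp only [fun θ => (hbdry θ).2] at hlog
  rw [integral_boundary_argument ha1 ha2 hal hr0 hr1 hr hx1 hx12 hx2 hD1 hD2 hX hD hDpos] at hlog
  have hH0 : H 0 = ((la1 + la2 * p2) * π (0, 0) : ℝ) := by
    have : ∑' n : ℕ, (π (0, n) : ℂ) * 0 ^ n = π (0, 0) := by
      rw [tsum_eq_single 0 fun n hn => by simp [hn]]; simp
    simp only [hH, this]
    push_cast; ring
  have hnum : 0 < la2 + la1 * p1 - mu1 * c1 * p1 - mu2 * c2 := by linarith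
  have hHr : H ((r : ℂ) ^ 2) = ((la2 + la1 * p1 - mu1 * c1 * p1 - mu2 * c2) / p1 : ℝ) := by
    have d1 := congrArg (fun t : ℝ => (t : ℂ)) hπ.drift
    have d2 := congrArg (fun t : ℝ => (t : ℂ)) hπ.swap.drift
    have hr' := congrArg (fun t : ℝ => (t : ℂ)) hr
    simp only [Prod.swap_prod_mk] at d1 d2
    push_cast at d1 d2 hr'
    have hr2 : r ^ 2 < 1 := pow_lt_one₀ hr0.le hr1 two_ne_zero
    have hfe := generating_function_equation hπ hs (x := 1) (y := (r : ℂ) ^ 2) (by simp)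
      (by simpa [abs_of_pos hr0] using hr2.le)
    have hne : (1 - (r : ℂ) ^ 2) ≠ 0 := by exact_mod_cast (sub_pos.2 hr2).ne'
    have hp1c : (p1 : ℂ) ≠ 0 := by exact_mod_cast hp1pos.ne'
    simp only [one_pow, mul_one] at hfe
    have hval : p1 * la1 * (∑' n : ℕ, (π (0, n) : ℂ) * ((r : ℂ) ^ 2) ^ n)
        = la2 * (∑' n : ℕ, (π (n, 0) : ℂ)) + p1 * la1 * π (0, 0) := by
      refine mul_left_cancel₀ hne ?_
      linear_combination (1 - (r : ℂ) ^ 2)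
        * (∑' m : ℕ × ℕ, (π m : ℂ) * (1 * ((r : ℂ) ^ 2) ^ m.2)) * hr' - hfe
    simp only [hH]
    push_cast
    rw [eq_div_iff hp1c]
    linear_combination (1 - p1 * p2 : ℂ) * hval + d1 + p1 * d2
  have hK : 0 < (la1 + la2 * p2) * π (0, 0) := by positivity
  rw [hH0, hHr, Complex.norm_real, Complex.norm_real, Real.norm_of_nonneg hK.le,
    Real.norm_of_nonneg (by positivity)] at hlog
  have hphi : phiY1 la1 la2 mu1 mu2 c1 c2 p1 p2 x1 x2
      = (la2 + la1 * p1 - mu1 * c1 * p1 - mu2 * c2) / p1 / ((la1 + la2 * p2) * π (0, 0)) := by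
    rw [phiY1, hlog, one_div, inv_mul_cancel_left₀ Real.pi_ne_zero, Real.exp_sub,
      Real.exp_log (by positivity), Real.exp_log hK]
  have hden : 0 < la1 + la2 * p2 := by positivity
  generalize la2 + la1 * p1 - mu1 * c1 * p1 - mu2 * c2 = N at hnum hphi ⊢
  rw [hphi]
  field_simp
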